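/- Let S = ⟨a, ah + d, ah + 2d, …, ah + kd⟩ be generated by a generalized arithmetic sequence, with h ≥ 1, d ≥ 1, 2 ≤ k < a, and gcd(a, d) = 1. Then Δ_0(S) = {1, 2}. -/

import Mathlib

open Finset

/-- `Zfac a x`: the set of factorizations of `x` with respect to the generators `a`. -/
def Zfac {k : ℕ} (a : Fin k → ℕ) (x : ℕ) : Set (Fin k → ℕ) :=
  {z | ∑ j, z j * a j = x}

/-- The `∞`-length of a factorization: the maximum coordinate. -/
def linf {k : ℕ} (z : Fin k → ℕ) : ℕ :=
  Finset.univ.sup z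

/-- The `0`-length of a factorization: the size of its support. -/
def lzero {k : ℕ} (z : Fin k → ℕ) : ℕ :=
  (Finset.univ.filter fun i => z i ≠ 0).card

/-- `𝓛∞(x)`: the set of `∞`-lengths of factorizations of `x`. -/
def LinfSet {k : ℕ} (a : Fin k → ℕ) (x : ℕ) : Set ℕ :=
  linf '' Zfac a x

/-- `𝓛∞(x, i)`: `∞`-lengths of factorizations whose maximum coordinate is attained at `i`. -/
def LinfSetI {k : ℕ} (a : Fin k → ℕ) (x : ℕ) (i : Fin k) : Set ℕ :=
  linf '' {z | z ∈ Zfac a x ∧ z i = linf z}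

/-- `𝓛₀(x)`: the set of `0`-lengths of factorizations of `x`. -/
def LzeroSet {k : ℕ} (a : Fin k → ℕ) (x : ℕ) : Set ℕ :=
  lzero '' Zfac a x

/-- The set of differences between consecutive elements of a set `T ⊆ ℕ`. -/
def deltaSet (T : Set ℕ) : Set ℕ :=
  {d | ∃ u ∈ T, ∃ v ∈ T, u < v ∧ v - u = d ∧ ∀ t ∈ T, ¬(u < t ∧ t < v)}

/-- `Δ∞(x)`. -/
def DeltaInf {k : ℕ} (a : Fin k → ℕ) (x : ℕ) : Set ℕ := deltaSet (LinfSet a x)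

/-- `Δ∞(S) = ⋃ x ∈ S, Δ∞(x)` (for `x ∉ S` the contribution is empty). -/
def DeltaInfS {k : ℕ} (a : Fin k → ℕ) : Set ℕ := ⋃ x : ℕ, DeltaInf a x

/-- `Δ₀(x)`. -/
def DeltaZero {k : ℕ} (a : Fin k → ℕ) (x : ℕ) : Set ℕ := deltaSet (LzeroSet a x)

/-- `Δ₀(S) = ⋃ x ∈ S, Δ₀(x)` (for `x ∉ S` the contribution is empty). -/
def DeltaZeroS {k : ℕ} (a : Fin k → ℕ) : Set ℕ := ⋃ x : ℕ, DeltaZero a x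

/-- `a` is a system of minimal generators: no generator is a `ℕ`-combination of the others. -/
def MinimalGens {k : ℕ} (a : Fin k → ℕ) : Prop :=
  ∀ i : Fin k, ¬ ∃ z : Fin k → ℕ, z i = 0 ∧ ∑ j, z j * a j = a i

/-!
Write `g₀ = a` and `gᵢ = ah + id`.

*Gaps are at most two.* A factorization with at least four generators in its support uses two
generators `gᵢ`, `gⱼ` with `0 < i, j < k`. Since `gᵢ + gⱼ` equals `h g₀ + gᵢ₊ⱼ` or
`g_k + gᵢ₊ⱼ₋ₖ`, one copy of each can be traded for a combination with fewer summands other than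
`g₀` and `g_k`, and the support loses at most two elements. Hence, among the factorizations of
`0`-length at least `v ≥ 4`, one with the fewest such summands trades to one of `0`-length `v - 1`
or `v - 2`.

*Gap one.* The element `2 g₁ = h g₀ + g₂` has `0`-lengths `1` and `2`.

*Gap two.* The element `(h - 1) g₀ + ∑ gᵢ` has `0`-length `k + 1`, and `k - 1` by the same
relation. A factorization missing only `gⱼ` would, after removing one copy of every other
generator, factor `(h - 1) g₀ + gⱼ` without using `gⱼ`; this is impossible because such
a factorization has at most one summand among `g₁, …, g_k`, and its index is determined modulo
`a / gcd(a, d) > k`.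
-/

lemma exists_eq_single_of_sum_eq_one {ι : Type*} [Fintype ι] [DecidableEq ι] {w : ι → ℕ}
    (hw : ∑ i, w i = 1) : ∃ i, w = Pi.single i 1 := by
  obtain ⟨i, hi⟩ := (Finsupp.sum_eq_one_iff (Finsupp.equivFunOnFinite.symm w)).1
    (by simpa [Finsupp.sum_fintype] using hw)
  exact ⟨i, by simpa [Finsupp.single_eq_pi_single] using congrArg DFunLike.coe hi⟩

lemma eq_of_mul_add_mul_eq {a d p q A B : ℕ} (hp : p < a / a.gcd d) (hq : q < a / a.gcd d)
    (heq : a * A + d * p = a * B + d * q) : p = q := by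
  have ha : 0 < a := Nat.pos_of_ne_zero fun h0 => by simp [h0] at hp
  have hmod : d * p ≡ d * q [MOD a] := by
    simpa [Nat.ModEq] using congrArg (· % a) heq
  exact (hmod.cancel_left_div_gcd ha).eq_of_lt_of_lt hp hq

section Lzero

variable {n : ℕ} {z w : Fin n → ℕ}

lemma lzero_eq_card {s : Finset (Fin n)} (hs : ∀ i, z i ≠ 0 ↔ i ∈ s) : lzero z = #s := by
  simp [lzero, hs]

lemma lzero_eq_zero_iff : lzero z = 0 ↔ z = 0 := by
  simp [lzero, funext_iff]

lemma lzero_single (i : Fin n) {c : ℕ} (hc : c ≠ 0) : lzero (Pi.single i c) = 1 := by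
  rw [lzero_eq_card (s := {i}) (by simp [Pi.single_apply, hc]), card_singleton]

lemma lzero_mono (h : z ≤ w) : lzero z ≤ lzero w :=
  card_le_card <| monotone_filter_right _ fun i => by have := h i; grind

lemma lzero_add_le (z w : Fin n → ℕ) : lzero (z + w) ≤ lzero z + lzero w := by
  refine (card_le_card fun i => ?_).trans (card_union_le _ _)
  simp only [mem_filter_univ, mem_union, Pi.add_apply]
  omega

lemma exists_forall_eq_zero_iff_of_lzero_eq {z : Fin (n + 1) → ℕ} (hz : lzero z = n) :
    ∃ j, ∀ i, z i = 0 ↔ i = j := by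
  have hcard : #(univ.filter fun i => z i ≠ 0)ᶜ = 1 := by
    rw [card_compl, Fintype.card_fin]
    exact Nat.sub_eq_of_eq_add' (congrArg (· + 1) hz).symm
  obtain ⟨j, hj⟩ := card_eq_one.1 hcard
  exact ⟨j, fun i => by simpa using Finset.ext_iff.1 hj i⟩

end Lzero

lemma deltaSet_subset_one_two {T : Set ℕ} (hzero : 0 ∈ T → T ⊆ {0})
    (hstep : ∀ v ∈ T, 4 ≤ v → ∃ u ∈ T, u < v ∧ v ≤ u + 2) : deltaSet T ⊆ {1, 2} := by
  rintro _ ⟨u, hu, v, hv, huv, rfl, hgap⟩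
  have hu_pos : u ≠ 0 := by
    rintro rfl
    exact huv.ne' (hzero hu hv)
  suffices v ≤ u + 2 by
    rw [Set.mem_insert_iff, Set.mem_singleton_iff]
    omega
  by_cases hv4 : 4 ≤ v
  · obtain ⟨t, ht, htv, hvt⟩ := hstep v hv hv4
    have := hgap t ht
    omega
  · omega

section Factorizations

variable {n : ℕ} {g : Fin n → ℕ} {x : ℕ}

lemma mem_Zfac_iff {z : Fin n → ℕ} : z ∈ Zfac g x ↔ z ⬝ᵥ g = x := Iff.rfl

lemma LzeroSet_subset_of_zero_mem (hg : ∀ i, 0 < g i) (h : 0 ∈ LzeroSet g x) :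
    LzeroSet g x ⊆ {0} := by
  obtain ⟨z, hz, hz0⟩ := h
  obtain rfl : 0 = x := by
    rwa [lzero_eq_zero_iff.1 hz0, mem_Zfac_iff, zero_dotProduct] at hz
  rintro _ ⟨w, hw, rfl⟩
  rw [mem_Zfac_iff, dotProduct, sum_eq_zero_iff] at hw
  exact lzero_eq_zero_iff.2 <| funext fun i =>
    (Nat.mul_eq_zero.1 (hw i (mem_univ i))).resolve_right (hg i).ne'

lemma add_one_mem_LzeroSet_add_sum {g : Fin (n + 1) → ℕ} (c : ℕ) :
    n + 1 ∈ LzeroSet g (c * g 0 + ∑ i, g i) := by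
  refine ⟨Pi.single 0 c + 1, ?_, ?_⟩
  · rw [mem_Zfac_iff, add_dotProduct, single_dotProduct, one_dotProduct]
  · rw [lzero_eq_card (s := univ) (by simp), card_univ, Fintype.card_fin]

lemma notMem_LzeroSet_add_sum {g : Fin (n + 1) → ℕ} {y : ℕ}
    (hg : ∀ j, ∀ w ∈ Zfac g (y + g j), w j ≠ 0) : n ∉ LzeroSet g (y + ∑ i, g i) := by
  rintro ⟨z, hz, hzn⟩
  obtain ⟨j, hj⟩ := exists_forall_eq_zero_iff_of_lzero_eq hzn
  -- Truncated subtraction keeps the value `0` at `j`, hence the correction term there.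
  have hsub : z - 1 + 1 = z + Pi.single j 1 := by
    ext i
    have := hj i
    simp only [Pi.add_apply, Pi.sub_apply, Pi.one_apply, Pi.single_apply]
    split_ifs <;> omega
  refine hg j (z - 1) ?_ (by simp [(hj j).2 rfl])
  have hval := congrArg (· ⬝ᵥ g) hsub
  simp only [add_dotProduct, one_dotProduct, single_one_dotProduct] at hval
  rw [mem_Zfac_iff] at hz ⊢
  linarith

end Factorizations

/-- The generalized arithmetic sequence `a, ah + d, ah + 2d, …, ah + kd`, indexed from `0`. -/
def arithGens (a h d k : ℕ) : Fin (k + 1) → ℕ :=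
  fun i => if (i : ℕ) = 0 then a else a * h + (i : ℕ) * d

/-- The indicator of the indices strictly between `0` and `k`; `z ⬝ᵥ innerIndicator k` counts the
summands of a factorization `z` other than copies of the first and the last generator. -/
def innerIndicator (k : ℕ) : Fin (k + 1) → ℕ :=
  fun i => if (i : ℕ) = 0 ∨ (i : ℕ) = k then 0 else 1

section ArithGens

variable {a h d k : ℕ}

lemma arithGens_zero : arithGens a h d k 0 = a := rfl

lemma arithGens_of_ne_zero {i : Fin (k + 1)} (hi : (i : ℕ) ≠ 0) :
    arithGens a h d k i = a * h + i * d := if_neg hi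

lemma arithGens_pos (ha : 0 < a) (hh : 0 < h) (i : Fin (k + 1)) : 0 < arithGens a h d k i := by
  unfold arithGens
  positivity

lemma exists_arithGens_eq (hh : 1 ≤ h) (j : Fin (k + 1)) :
    ∃ c ≤ h, arithGens a h d k j = a * c + d * j := by
  by_cases hj : (j : ℕ) = 0
  · exact ⟨1, hh, by simp [arithGens, hj]⟩
  · exact ⟨h, le_rfl, by rw [arithGens_of_ne_zero hj, mul_comm d]⟩

lemma arithGens_add_eq_mul_zero_add {i j l : Fin (k + 1)} (hi : (i : ℕ) ≠ 0) (hj : (j : ℕ) ≠ 0)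
    (hl : (i + j : ℕ) = l) :
    arithGens a h d k i + arithGens a h d k j =
      h * arithGens a h d k 0 + arithGens a h d k l := by
  rw [arithGens_of_ne_zero hi, arithGens_of_ne_zero hj, arithGens_zero,
    arithGens_of_ne_zero (by omega), ← hl]
  ring

lemma arithGens_add_eq_add {i j l m : Fin (k + 1)} (hi : (i : ℕ) ≠ 0) (hj : (j : ℕ) ≠ 0)
    (hl : (l : ℕ) ≠ 0) (hm : (m : ℕ) ≠ 0) (hsum : (i + j : ℕ) = l + m) :
    arithGens a h d k i + arithGens a h d k j = arithGens a h d k l + arithGens a h d k m := by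
  have hmul : (i + j : ℕ) * d = (l + m) * d := by rw [hsum]
  rw [arithGens_of_ne_zero hi, arithGens_of_ne_zero hj, arithGens_of_ne_zero hl,
    arithGens_of_ne_zero hm]
  linarith

lemma dotProduct_arithGens (z : Fin (k + 1) → ℕ) :
    z ⬝ᵥ arithGens a h d k =
      a * (z 0 + h * ∑ i : Fin k, z i.succ) + d * ∑ i : Fin k, (i + 1) * z i.succ := by
  simp only [dotProduct, Fin.sum_univ_succ, arithGens_zero, mul_add, mul_sum, add_assoc,
    ← sum_add_distrib]
  congr 1
  · ring
  · refine sum_congr rfl fun i _ => ?_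
    rw [arithGens_of_ne_zero (by simp), Fin.val_succ]
    ring

lemma innerIndicator_le_one (i : Fin (k + 1)) : innerIndicator k i ≤ 1 := by
  unfold innerIndicator
  split_ifs <;> omega

lemma innerIndicator_zero : innerIndicator k 0 = 0 := by simp [innerIndicator]

lemma innerIndicator_last : innerIndicator k (Fin.last k) = 0 := by simp [innerIndicator]

lemma exists_ne_innerIndicator_eq_one {z : Fin (k + 1) → ℕ} (hz : 4 ≤ lzero z) :
    ∃ i j, i ≠ j ∧ z i ≠ 0 ∧ z j ≠ 0 ∧ innerIndicator k i = 1 ∧ innerIndicator k j = 1 := by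
  have hcard : 1 < #((univ.filter fun i => z i ≠ 0) \ {0, Fin.last k}) := by
    have h_sdiff := le_card_sdiff {0, Fin.last k} (univ.filter fun i => z i ≠ 0)
    have h_ends : #({0, Fin.last k} : Finset (Fin (k + 1))) ≤ 2 := card_le_two
    unfold lzero at hz
    omega
  obtain ⟨i, hi, j, hj, hij⟩ := one_lt_card.1 hcard
  simp only [mem_sdiff, mem_filter_univ, mem_insert, mem_singleton, Fin.ext_iff, Fin.val_zero,
    Fin.val_last] at hi hj
  exact ⟨i, j, hij, hi.1, hj.1, if_neg hi.2, if_neg hj.2⟩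

lemma exists_trade {i j : Fin (k + 1)} (hi : innerIndicator k i = 1) (hj : innerIndicator k j = 1) :
    ∃ r : Fin (k + 1) → ℕ,
      r ⬝ᵥ arithGens a h d k = arithGens a h d k i + arithGens a h d k j ∧
        r ⬝ᵥ innerIndicator k ≤ 1 := by
  have hi' : (i : ℕ) ≠ 0 ∧ (i : ℕ) ≠ k := by simpa [innerIndicator] using hi
  have hj' : (j : ℕ) ≠ 0 ∧ (j : ℕ) ≠ k := by simpa [innerIndicator] using hj
  rcases le_or_gt (i + j : ℕ) k with hle | hlt
  · let l : Fin (k + 1) := ⟨i + j, by omega⟩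
    refine ⟨Pi.single 0 h + Pi.single l 1, ?_, ?_⟩
    · rw [arithGens_add_eq_mul_zero_add (l := l) hi'.1 hj'.1 rfl, add_dotProduct,
        single_dotProduct, single_one_dotProduct]
    · simpa [add_dotProduct, innerIndicator_zero] using innerIndicator_le_one l
  · let l : Fin (k + 1) := ⟨i + j - k, by omega⟩
    refine ⟨Pi.single (Fin.last k) 1 + Pi.single l 1, ?_, ?_⟩
    · rw [arithGens_add_eq_add (l := Fin.last k) (m := l) hi'.1 hj'.1 (by grind) (by grind)
        (by grind), add_dotProduct, single_one_dotProduct, single_one_dotProduct]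
    · simpa [add_dotProduct, innerIndicator_last] using innerIndicator_le_one l

lemma exists_dotProduct_innerIndicator_lt {z : Fin (k + 1) → ℕ} (hz : 4 ≤ lzero z) :
    ∃ z' : Fin (k + 1) → ℕ, z' ⬝ᵥ arithGens a h d k = z ⬝ᵥ arithGens a h d k ∧
      z' ⬝ᵥ innerIndicator k < z ⬝ᵥ innerIndicator k ∧ lzero z ≤ lzero z' + 2 := by
  obtain ⟨i, j, hij, hzi, hzj, hi, hj⟩ := exists_ne_innerIndicator_eq_one hz
  obtain ⟨r, hr_val, hr_int⟩ := exists_trade (a := a) (h := h) (d := d) hi hj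
  obtain ⟨w, rfl⟩ : ∃ w, z = w + (Pi.single i 1 + Pi.single j 1) := by
    refine ⟨z - (Pi.single i 1 + Pi.single j 1), (tsub_add_cancel_of_le fun t => ?_).symm⟩
    simp only [Pi.add_apply, Pi.single_apply]
    split_ifs <;> grind
  refine ⟨w + r, ?_, ?_, ?_⟩
  · simp only [add_dotProduct, single_one_dotProduct, hr_val]
  · simp only [add_dotProduct, single_one_dotProduct, hi, hj]
    omega
  · calc lzero (w + (Pi.single i 1 + Pi.single j 1))
        ≤ lzero w + (lzero (Pi.single i 1) + lzero (Pi.single j 1)) :=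
          (lzero_add_le _ _).trans (Nat.add_le_add_left (lzero_add_le _ _) _)
      _ = lzero w + 2 := by rw [lzero_single i one_ne_zero, lzero_single j one_ne_zero]
      _ ≤ lzero (w + r) + 2 := Nat.add_le_add_right (lzero_mono le_self_add) 2

lemma exists_mem_LzeroSet_lt {x v : ℕ} (hv : v ∈ LzeroSet (arithGens a h d k) x) (hv4 : 4 ≤ v) :
    ∃ u ∈ LzeroSet (arithGens a h d k) x, u < v ∧ v ≤ u + 2 := by
  obtain ⟨z₀, hz₀, hz₀v⟩ := hv
  obtain ⟨z, ⟨hz, hvz⟩, hmin⟩ := exists_minimalFor_of_wellFoundedLT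
    (fun z => z ∈ Zfac (arithGens a h d k) x ∧ v ≤ lzero z) (· ⬝ᵥ innerIndicator k)
    ⟨z₀, hz₀, hz₀v.ge⟩
  obtain ⟨z', hval, hlt, hle⟩ := exists_dotProduct_innerIndicator_lt (a := a) (h := h) (d := d)
    (hv4.trans hvz)
  have hz' : z' ∈ Zfac (arithGens a h d k) x := hval.trans hz
  refine ⟨lzero z', ⟨z', hz', rfl⟩, ?_, hvz.trans hle⟩
  by_contra! hvz'
  exact hlt.not_ge (hmin ⟨hz', hvz'⟩ hlt.le)

lemma DeltaZeroS_arithGens_subset (ha : 0 < a) (hh : 0 < h) :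
    DeltaZeroS (arithGens a h d k) ⊆ {1, 2} :=
  Set.iUnion_subset fun _ => deltaSet_subset_one_two
    (LzeroSet_subset_of_zero_mem (arithGens_pos ha hh)) fun _ => exists_mem_LzeroSet_lt

lemma one_mem_DeltaZeroS_arithGens (hh : 1 ≤ h) (hk : 2 ≤ k) :
    1 ∈ DeltaZeroS (arithGens a h d k) := by
  let i₁ : Fin (k + 1) := ⟨1, by omega⟩
  let i₂ : Fin (k + 1) := ⟨2, by omega⟩
  have h₀₂ : (0 : Fin (k + 1)) ≠ i₂ := by simp [i₂, Fin.ext_iff]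
  have hrel := arithGens_add_eq_mul_zero_add (a := a) (h := h) (d := d) (i := i₁) (j := i₁)
    (l := i₂) one_ne_zero one_ne_zero rfl
  refine Set.mem_iUnion.2 ⟨2 * arithGens a h d k i₁, 1,
    ⟨Pi.single i₁ 2, single_dotProduct .., lzero_single _ two_ne_zero⟩,
    2, ⟨Pi.single 0 h + Pi.single i₂ 1, ?_, ?_⟩, by omega, by omega, by omega⟩
  · rw [mem_Zfac_iff, add_dotProduct, single_dotProduct, single_one_dotProduct, ← hrel, two_mul]
  · rw [lzero_eq_card (s := {0, i₂}), card_pair h₀₂]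
    intro i
    simp only [Pi.add_apply, Pi.single_apply, mem_insert, mem_singleton]
    grind

lemma sum_succ_eq_of_mem_Zfac (hh : 1 ≤ h) (hka : k < a / a.gcd d) {j : Fin (k + 1)}
    {w : Fin (k + 1) → ℕ}
    (hw : w ∈ Zfac (arithGens a h d k) ((h - 1) * a + arithGens a h d k j)) :
    ∑ i : Fin k, w i.succ ≤ 1 ∧ ∑ i : Fin k, (i + 1) * w i.succ = j := by
  have ha : 0 < a := Nat.pos_of_ne_zero fun h0 => by simp [h0] at hka
  obtain ⟨c, hc_le, hc⟩ := exists_arithGens_eq (a := a) (d := d) hh j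
  set N := ∑ i : Fin k, w i.succ with hN
  set B := ∑ i : Fin k, (i + 1) * w i.succ
  have hval : a * (w 0 + h * N) + d * B = a * (h - 1 + c) + d * j := by
    rw [mem_Zfac_iff, dotProduct_arithGens, hc] at hw
    rw [hw]
    ring
  have hB_le : B ≤ k := by
    rcases Nat.lt_or_ge N 2 with hN_lt | hN_ge
    · calc B ≤ ∑ i : Fin k, k * w i.succ := sum_le_sum fun i _ => Nat.mul_le_mul_right _ i.isLt
        _ = k * N := by rw [hN, mul_sum]
        _ ≤ k := mul_le_of_le_one_right' (by omega)
    · have hA_lt : h - 1 + c + 1 ≤ w 0 + h * N := by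
        have := Nat.mul_le_mul_left h hN_ge
        omega
      have hBj_lt : d * B < d * j := by
        have := Nat.mul_le_mul_left a hA_lt
        rw [mul_add_one] at this
        omega
      exact (lt_of_mul_lt_mul_left hBj_lt (Nat.zero_le d)).le.trans j.is_le
  have hBj : B = j := eq_of_mul_add_mul_eq (by omega) (by omega) hval
  have hA : w 0 + h * N = h - 1 + c := by
    rw [hBj] at hval
    exact Nat.eq_of_mul_eq_mul_left ha (Nat.add_right_cancel hval)
  refine ⟨?_, hBj⟩
  by_contra! hN_ge
  have := Nat.mul_le_mul_left h hN_ge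
  omega

lemma ne_zero_of_mem_Zfac (hh : 1 ≤ h) (hka : k < a / a.gcd d) {j : Fin (k + 1)}
    {w : Fin (k + 1) → ℕ}
    (hw : w ∈ Zfac (arithGens a h d k) ((h - 1) * a + arithGens a h d k j)) : w j ≠ 0 := by
  have ha : 0 < a := Nat.pos_of_ne_zero fun h0 => by simp [h0] at hka
  obtain ⟨hN, hB⟩ := sum_succ_eq_of_mem_Zfac hh hka hw
  obtain hN0 | hN1 := Nat.le_one_iff_eq_zero_or_eq_one.1 hN
  · have hw_succ : ∀ i : Fin k, w i.succ = 0 := by simpa using hN0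
    obtain rfl : j = 0 := Fin.ext (by simp [← hB, hw_succ])
    intro hw_zero
    rw [mem_Zfac_iff, dotProduct_arithGens] at hw
    simp only [hw_zero, hw_succ, sum_const_zero, mul_zero, add_zero, arithGens_zero] at hw
    omega
  · obtain ⟨i, hi⟩ := exists_eq_single_of_sum_eq_one hN1
    have hw_succ (t : Fin k) : w t.succ = (Pi.single i 1 : Fin k → ℕ) t := congrFun hi t
    obtain rfl : j = i.succ := Fin.ext (by simp [← hB, hw_succ, Pi.single_apply])
    simp [hw_succ]

lemma sub_one_mem_LzeroSet_arithGens (hh : 1 ≤ h) (hk : 2 ≤ k) :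
    k - 1 ∈ LzeroSet (arithGens a h d k) ((h - 1) * a + ∑ i, arithGens a h d k i) := by
  let i₁ : Fin (k + 1) := ⟨1, by omega⟩
  let i₂ : Fin (k + 1) := ⟨2, by omega⟩
  have h₀₂ : (0 : Fin (k + 1)) ≠ i₂ := by simp [i₂, Fin.ext_iff]
  have hrel := arithGens_add_eq_mul_zero_add (a := a) (h := h) (d := d) (i := i₁) (j := i₁)
    (l := i₂) one_ne_zero one_ne_zero rfl
  let z : Fin (k + 1) → ℕ := fun i => if i = 0 ∨ i = i₂ then 0 else if i = i₁ then 3 else 1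
  refine ⟨z, ?_, ?_⟩
  · have hz : z + (Pi.single 0 1 + Pi.single i₂ 1) = 1 + Pi.single i₁ 2 := by
      ext t
      simp only [z, Pi.add_apply, Pi.single_apply, Pi.one_apply]
      grind
    have hval := congrArg (· ⬝ᵥ arithGens a h d k) hz
    simp only [add_dotProduct, one_dotProduct, single_dotProduct, arithGens_zero] at hval hrel
    have hah : (h - 1) * a + a = h * a := by rw [← add_one_mul, Nat.sub_add_cancel hh]
    rw [mem_Zfac_iff]
    linarith
  · rw [lzero_eq_card (s := {0, i₂}ᶜ) (by grind [mem_compl]), card_compl, card_pair h₀₂,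
      Fintype.card_fin, Nat.add_sub_add_right k 1 1]

lemma two_mem_DeltaZeroS_arithGens (hh : 1 ≤ h) (hk : 2 ≤ k) (hka : k < a / a.gcd d) :
    2 ∈ DeltaZeroS (arithGens a h d k) := by
  have h_gap : k ∉ LzeroSet (arithGens a h d k) ((h - 1) * a + ∑ i, arithGens a h d k i) :=
    notMem_LzeroSet_add_sum fun _ _ => ne_zero_of_mem_Zfac hh hka
  refine Set.mem_iUnion.2 ⟨_, k - 1, sub_one_mem_LzeroSet_arithGens hh hk,
    k + 1, add_one_mem_LzeroSet_add_sum (h - 1), by omega, by omega, ?_⟩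
  rintro t ht ⟨hlt, hgt⟩
  obtain rfl : t = k := by omega
  exact h_gap ht

end ArithGens

theorem stmt_16_general (a h d k : ℕ) (hh : 1 ≤ h) (hk : 2 ≤ k) (hka : k < a / a.gcd d) :
    DeltaZeroS (arithGens a h d k) = {1, 2} := by
  have ha : 0 < a := Nat.pos_of_ne_zero fun h0 => by simp [h0] at hka
  refine (DeltaZeroS_arithGens_subset ha hh).antisymm (Set.pair_subset ?_ ?_)
  · exact one_mem_DeltaZeroS_arithGens hh hk
  · exact two_mem_DeltaZeroS_arithGens hh hk hka

/-- For `S = ⟨a, ah + d, ah + 2d, …, ah + kd⟩` generated by a generalized arithmetic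
sequence with `h ≥ 1`, `2 ≤ k < a`, `gcd(a,d) = 1`, one has `Δ₀(S) = {1, 2}`. -/
theorem stmt_16 (a h d k : ℕ) (hh : 1 ≤ h) (hd : 1 ≤ d) (hk : 2 ≤ k) (hka : k < a)
    (hcop : Nat.Coprime a d) :
    DeltaZeroS (fun i : Fin (k + 1) =>
      if (i : ℕ) = 0 then a else a * h + (i : ℕ) * d) = {1, 2} := by
  exact stmt_16_general a h d k hh hk (by rwa [hcop.gcd_eq_one, Nat.div_one])
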